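/- arXiv:1408.2992 — 2 statements merged into one kernel-verified Lean document; each statement's English description precedes it below -/
import Mathlib

section
/- Let f : ℝ → ℝ be a continuous convex function satisfying an exponential growth condition: there exist C ≥ 0 and a ≥ 0 with |f(y)| ≤ C·exp(a|y|) for all y. Let x ∈ ℝ, t > 0, and 0 < σ ≤ ρ. Then ∫ f d(N(x, σ²t)) ≤ ∫ f d(N(x, ρ²t)), where N(m, s) denotes the Gaussian measure on ℝ with mean m and variance s. -/
/-!
If `v ≤ w`, then `N(x, w) = N(x, v) ∗ N(0, w - v)`, and convolving with a centred probability
measure `ν` can only increase the integral of a convex function `f`: by Jensen's inequality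
`f z ≤ ∫ f (z + y) dν(y)`, and integrating over `z` gives the comparison. Integrability of `f` for
the less spread-out measure comes from squeezing `f` between an affine minorant and
`z ↦ ∫ f (z + y) dν(y)`.
-/

open MeasureTheory ProbabilityTheory
open scoped NNReal

section AffineMinorant

variable {E : Type*} [AddCommGroup E] [Module ℝ E] [TopologicalSpace E] [IsTopologicalAddGroup E]
  [ContinuousSMul ℝ E] [LocallyConvexSpace ℝ E] {f : E → ℝ}

lemma exists_continuousLinearMap_add_const_le_of_convexOn_univ
    (hf_conv : ConvexOn ℝ Set.univ f) (hf_lsc : LowerSemicontinuous f) :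
    ∃ (l : E →L[ℝ] ℝ) (c : ℝ), ∀ x, l x + c ≤ f x := by
  obtain ⟨l, c, hle, -⟩ := hf_conv.exists_affine_le_of_lt (𝕜 := ℝ) (Set.mem_univ (0 : E))
    (sub_one_lt (f 0)) isClosed_univ (hf_lsc.lowerSemicontinuousOn _)
  exact ⟨l, c, fun x => hle ⟨x, Set.mem_univ x⟩⟩

end AffineMinorant

section Convolution

lemma integrable_integral_add_of_integrable_conv {M F : Type*} [AddMonoid M] [MeasurableSpace M]
    [MeasurableAdd₂ M] [NormedAddCommGroup F] [NormedSpace ℝ F] {μ ν : Measure M} [SFinite ν]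
    {f : M → F} (hf_int : Integrable f (μ ∗ ν)) :
    Integrable (fun z => ∫ y, f (z + y) ∂ν) μ :=
  (hf_int.comp_measurable measurable_add).integral_prod_left

variable {E : Type*} [NormedAddCommGroup E] [NormedSpace ℝ E] [CompleteSpace E]
  [MeasurableSpace E] {f : E → ℝ} {μ ν : Measure E} [IsProbabilityMeasure ν]

lemma le_integral_add_of_convexOn_univ (hf_conv : ConvexOn ℝ Set.univ f) (hf_cont : Continuous f)
    (hν_int : Integrable id ν) (hν_mean : ∫ y, y ∂ν = 0) {z : E}
    (hfz : Integrable (fun y => f (z + y)) ν) :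
    f z ≤ ∫ y, f (z + y) ∂ν := by
  have hmean : ∫ y, (z + y) ∂ν = z := by
    rw [integral_add (g := fun y => y) (integrable_const z) hν_int, hν_mean,
      integral_const, probReal_univ, one_smul, add_zero]
  calc f z = f (∫ y, (z + y) ∂ν) := by rw [hmean]
    _ ≤ ∫ y, f (z + y) ∂ν :=
      hf_conv.map_integral_le hf_cont.continuousOn isClosed_univ (by simp)
        ((integrable_const z).add hν_int) hfz

variable [BorelSpace E] [SecondCountableTopology E]

lemma ae_le_integral_add_of_integrable_conv (hf_conv : ConvexOn ℝ Set.univ f)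
    (hf_cont : Continuous f) (hν_int : Integrable id ν) (hν_mean : ∫ y, y ∂ν = 0)
    (hf_int : Integrable f (μ ∗ ν)) :
    ∀ᵐ z ∂μ, f z ≤ ∫ y, f (z + y) ∂ν := by
  filter_upwards [((integrable_conv_iff hf_int.1).1 hf_int).1] with z hfz
  exact le_integral_add_of_convexOn_univ hf_conv hf_cont hν_int hν_mean hfz

variable [IsFiniteMeasure μ]

lemma integrable_of_convexOn_univ_of_integrable_conv (hf_conv : ConvexOn ℝ Set.univ f)
    (hf_cont : Continuous f) (hμ_int : Integrable id μ) (hν_int : Integrable id ν)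
    (hν_mean : ∫ y, y ∂ν = 0) (hf_int : Integrable f (μ ∗ ν)) :
    Integrable f μ := by
  obtain ⟨l, c, hle⟩ := exists_continuousLinearMap_add_const_le_of_convexOn_univ hf_conv
    hf_cont.lowerSemicontinuous
  exact integrable_of_le_of_le hf_cont.aestronglyMeasurable (ae_of_all μ hle)
    (ae_le_integral_add_of_integrable_conv hf_conv hf_cont hν_int hν_mean hf_int)
    ((l.integrable_comp hμ_int).add (integrable_const c))
    (integrable_integral_add_of_integrable_conv hf_int)

theorem integral_le_integral_conv_of_convexOn_univ (hf_conv : ConvexOn ℝ Set.univ f)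
    (hf_cont : Continuous f) (hμ_int : Integrable id μ) (hν_int : Integrable id ν)
    (hν_mean : ∫ y, y ∂ν = 0) (hf_int : Integrable f (μ ∗ ν)) :
    ∫ z, f z ∂μ ≤ ∫ z, f z ∂(μ ∗ ν) := by
  rw [integral_conv hf_int]
  exact integral_mono_ae
    (integrable_of_convexOn_univ_of_integrable_conv hf_conv hf_cont hμ_int hν_int hν_mean hf_int)
    (integrable_integral_add_of_integrable_conv hf_int)
    (ae_le_integral_add_of_integrable_conv hf_conv hf_cont hν_int hν_mean hf_int)

end Convolution

lemma integrable_of_norm_le_const_mul_exp_mul_abs {F : Type*} [NormedAddCommGroup F]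
    {μ : Measure ℝ} {f : ℝ → F} {C a : ℝ} (hf : AEStronglyMeasurable f μ)
    (hexp : Integrable (fun y => Real.exp (a * y)) μ)
    (hexp_neg : Integrable (fun y => Real.exp (-a * y)) μ)
    (hf_growth : ∀ᵐ y ∂μ, ‖f y‖ ≤ C * Real.exp (a * |y|)) :
    Integrable f μ :=
  ((integrable_exp_mul_abs hexp hexp_neg).const_mul C).mono' hf hf_growth

lemma integrable_id_gaussianReal (m : ℝ) (v : ℝ≥0) : Integrable id (gaussianReal m v) :=
  (memLp_id_gaussianReal 1).integrable le_rfl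

lemma gaussianReal_conv_gaussianReal_zero_sub (m : ℝ) {v w : ℝ≥0} (hvw : v ≤ w) :
    gaussianReal m v ∗ gaussianReal 0 (w - v) = gaussianReal m w := by
  rw [gaussianReal_conv_gaussianReal, add_zero, add_tsub_cancel_of_le hvw]

theorem gaussian_convex_comparison_no_drift_general {f : ℝ → ℝ}
    (hf_conv : ConvexOn ℝ Set.univ f) (x : ℝ) {v w : ℝ≥0} (hvw : v ≤ w)
    (hf_int : Integrable f (gaussianReal x w)) :
    Integrable f (gaussianReal x v) ∧
      ∫ y, f y ∂(gaussianReal x v) ≤ ∫ y, f y ∂(gaussianReal x w) := by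
  have hf_cont : Continuous f := hf_conv.locallyLipschitz.continuous
  have hμ_int := integrable_id_gaussianReal x v
  have hν_int := integrable_id_gaussianReal 0 (w - v)
  have hν_mean : ∫ y, y ∂(gaussianReal 0 (w - v)) = 0 := integral_id_gaussianReal
  rw [← gaussianReal_conv_gaussianReal_zero_sub x hvw] at hf_int ⊢
  exact ⟨integrable_of_convexOn_univ_of_integrable_conv hf_conv hf_cont hμ_int hν_int hν_mean
      hf_int,
    integral_le_integral_conv_of_convexOn_univ hf_conv hf_cont hμ_int hν_int hν_mean hf_int⟩

/-- Hajek's comparison, constant-coefficient univariate driftless case: for a continuous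
convex `f` of exponential growth and `0 < σ ≤ ρ`, the Gaussian mean of `f` with variance
`σ²t` is at most the one with variance `ρ²t`. -/
theorem gaussian_convex_comparison_no_drift
    (f : ℝ → ℝ) (hf_cont : Continuous f) (hf_conv : ConvexOn ℝ Set.univ f)
    (C a : ℝ) (hC : 0 ≤ C) (ha : 0 ≤ a)
    (hf_growth : ∀ y : ℝ, |f y| ≤ C * Real.exp (a * |y|))
    (x t σ ρ : ℝ) (ht : 0 < t) (hσ : 0 < σ) (hσρ : σ ≤ ρ) :
    ∫ y, f y ∂(gaussianReal x (σ ^ 2 * t).toNNReal)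
      ≤ ∫ y, f y ∂(gaussianReal x (ρ ^ 2 * t).toNNReal) := by
  have hvar : (σ ^ 2 * t).toNNReal ≤ (ρ ^ 2 * t).toNNReal :=
    Real.toNNReal_le_toNNReal (by gcongr)
  have hf_int : Integrable f (gaussianReal x (ρ ^ 2 * t).toNNReal) :=
    integrable_of_norm_le_const_mul_exp_mul_abs hf_cont.aestronglyMeasurable
      (integrable_exp_mul_gaussianReal a) (integrable_exp_mul_gaussianReal (-a))
      (ae_of_all _ hf_growth)
  exact (gaussian_convex_comparison_no_drift_general hf_conv x hvar hf_int).2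
end

section
/- Let n ≥ 1, let A, B be symmetric positive semidefinite real n×n matrices with B − A positive semidefinite, let c ∈ ℝⁿ with cᵀAc > 0, let m ∈ ℝ, t > 0, and let f : ℝ → ℝ be a continuous convex function with |f(y)| ≤ C·exp(a|y|) for some C, a ≥ 0 and all y. Then ∫ f d(N(m, t·cᵀAc)) ≤ ∫ f d(N(m, t·cᵀBc)), where N(m, s) denotes the Gaussian measure on ℝ with mean m and variance s. In particular, for constant dispersion matrices σ, ρ with σσᵀ = A and ρρᵀ = B, the processes X(t) = x + σW(t) and Y(t) = x + ρW(t) satisfy E^x[f(∑_i c_i X_i(t))] ≤ E^x[f(∑_i c_i Y_i(t))] since ∑_i c_i X_i(t) ∼ N(∑_i c_i x_i, t·cᵀσσᵀc). -/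
open MeasureTheory ProbabilityTheory Matrix

/-!
If `A ≤ B`, the Gaussian with the larger variance `t·cᵀBc` is the convolution of the one with
variance `t·cᵀAc` and a centered Gaussian. Convolving `μ` with a centered probability measure `ν`
increases the integral of a convex function: Jensen's inequality gives
`f x ≤ ∫ y, f (x + y) ∂ν` pointwise, and it remains to integrate in `x` against `μ`.
-/

open scoped NNReal

lemma integrable_integral_comp_add {M F : Type*} [AddMonoid M] [MeasurableSpace M]
    [MeasurableAdd₂ M] [NormedAddCommGroup F] [NormedSpace ℝ F] {μ ν : Measure M} [SFinite μ]
    [SFinite ν] {f : M → F} (hf : Integrable f (μ ∗ ν)) :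
    Integrable (fun x ↦ ∫ y, f (x + y) ∂ν) μ :=
  ((integrable_map_measure hf.aestronglyMeasurable (by fun_prop)).1 hf).integral_prod_left

section Convolution

variable {E : Type*} [NormedAddCommGroup E] [NormedSpace ℝ E] [CompleteSpace E]
  [MeasurableSpace E] {f : E → ℝ} {μ ν : Measure E} [IsProbabilityMeasure ν]

lemma le_integral_comp_const_add_of_convexOn (hf : ConvexOn ℝ Set.univ f)
    (hf_cont : Continuous f) (hν : Integrable id ν) (hν_mean : ∫ y, y ∂ν = 0) {x : E}
    (hx : Integrable (fun y ↦ f (x + y)) ν) : f x ≤ ∫ y, f (x + y) ∂ν := by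
  have hmean : ∫ y, (x + y) ∂ν = x := by
    rw [integral_add (g := fun y ↦ y) (integrable_const x) hν, hν_mean, integral_const,
      probReal_univ, one_smul, add_zero]
  calc f x = f (∫ y, (x + y) ∂ν) := by rw [hmean]
    _ ≤ ∫ y, f (x + y) ∂ν :=
      hf.map_integral_le hf_cont.continuousOn isClosed_univ (.of_forall fun _ ↦ Set.mem_univ _)
        ((integrable_const x).add hν) hx

variable [MeasurableAdd₂ E]

lemma ae_le_integral_comp_add_of_convexOn (hf : ConvexOn ℝ Set.univ f) (hf_cont : Continuous f)
    (hν : Integrable id ν) (hν_mean : ∫ y, y ∂ν = 0) (hf_int : Integrable f (μ ∗ ν)) :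
    ∀ᵐ x ∂μ, f x ≤ ∫ y, f (x + y) ∂ν := by
  filter_upwards [((integrable_conv_iff hf_int.aestronglyMeasurable).1 hf_int).1] with x hx
  exact le_integral_comp_const_add_of_convexOn hf hf_cont hν hν_mean hx

variable [OpensMeasurableSpace E] [IsFiniteMeasure μ]

lemma integrable_of_integrable_conv_of_convexOn (hf : ConvexOn ℝ Set.univ f)
    (hf_cont : Continuous f) (hμ : Integrable id μ) (hν : Integrable id ν)
    (hν_mean : ∫ y, y ∂ν = 0) (hf_int : Integrable f (μ ∗ ν)) : Integrable f μ := by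
  obtain ⟨l, b, hlb, -⟩ := hf.exists_affine_le_of_lt (𝕜 := ℝ) (Set.mem_univ 0)
    (sub_one_lt (f 0)) isClosed_univ (hf_cont.lowerSemicontinuous.lowerSemicontinuousOn _)
  have h_lower : ∀ x, l x + b ≤ f x := fun x ↦ hlb ⟨x, Set.mem_univ x⟩
  have h_upper : ∀ᵐ x ∂μ, f x ≤ ∫ y, f (x + y) ∂ν :=
    ae_le_integral_comp_add_of_convexOn hf hf_cont hν hν_mean hf_int
  exact integrable_of_le_of_le hf_cont.aestronglyMeasurable (.of_forall h_lower) h_upper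
    ((l.integrable_comp hμ).add (integrable_const b)) (integrable_integral_comp_add hf_int)

theorem integral_le_integral_conv_of_convexOn (hf : ConvexOn ℝ Set.univ f)
    (hf_cont : Continuous f) (hμ : Integrable id μ) (hν : Integrable id ν)
    (hν_mean : ∫ y, y ∂ν = 0) (hf_int : Integrable f (μ ∗ ν)) :
    ∫ x, f x ∂μ ≤ ∫ x, f x ∂(μ ∗ ν) := by
  have hμ_int : Integrable f μ :=
    integrable_of_integrable_conv_of_convexOn hf hf_cont hμ hν hν_mean hf_int
  calc ∫ x, f x ∂μ ≤ ∫ x, ∫ y, f (x + y) ∂ν ∂μ :=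
        integral_mono_ae hμ_int (integrable_integral_comp_add hf_int)
          (ae_le_integral_comp_add_of_convexOn hf hf_cont hν hν_mean hf_int)
    _ = ∫ x, f x ∂(μ ∗ ν) := (integral_conv hf_int).symm

end Convolution

theorem integral_gaussianReal_le_of_convexOn {f : ℝ → ℝ} (hf : ConvexOn ℝ Set.univ f) {m : ℝ}
    {v w : ℝ≥0} (hvw : v ≤ w) (hf_int : Integrable f (gaussianReal m w)) :
    ∫ y, f y ∂(gaussianReal m v) ≤ ∫ y, f y ∂(gaussianReal m w) := by
  have hconv : gaussianReal m v ∗ gaussianReal 0 (w - v) = gaussianReal m w := by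
    rw [gaussianReal_conv_gaussianReal, add_zero, add_tsub_cancel_of_le hvw]
  have hid (m : ℝ) (v : ℝ≥0) : Integrable id (gaussianReal m v) :=
    (memLp_id_gaussianReal 1).integrable le_rfl
  rw [← hconv] at hf_int ⊢
  exact integral_le_integral_conv_of_convexOn hf hf.locallyLipschitz.continuous (hid m v)
    (hid 0 (w - v)) integral_id_gaussianReal hf_int

lemma integrable_of_norm_le_mul_exp_abs {Ω F : Type*} [MeasurableSpace Ω] [NormedAddCommGroup F]
    {μ : Measure Ω} {g : Ω → F} {X : Ω → ℝ} {C a : ℝ} (hg : AEStronglyMeasurable g μ)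
    (hX : Integrable (fun ω ↦ Real.exp (a * X ω)) μ)
    (hX_neg : Integrable (fun ω ↦ Real.exp (-a * X ω)) μ)
    (hgX : ∀ᵐ ω ∂μ, ‖g ω‖ ≤ C * Real.exp (a * |X ω|)) : Integrable g μ :=
  ((integrable_exp_mul_abs hX hX_neg).const_mul C).mono' hg hgX

theorem gaussian_convex_comparison_matrix_variance_general {ι : Type*} [Fintype ι]
    {A B : Matrix ι ι ℝ} (hBA_psd : ∀ y : ι → ℝ, 0 ≤ y ⬝ᵥ (B - A).mulVec y) (c : ι → ℝ)
    {m t : ℝ} (ht : 0 ≤ t) {v w : ℝ≥0} (hv : v = t * (c ⬝ᵥ A.mulVec c))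
    (hw : w = t * (c ⬝ᵥ B.mulVec c)) {f : ℝ → ℝ} (hf_conv : ConvexOn ℝ Set.univ f)
    (hf_int : Integrable f (gaussianReal m w)) :
    ∫ y, f y ∂(gaussianReal m v) ≤ ∫ y, f y ∂(gaussianReal m w) := by
  have hAB : c ⬝ᵥ A.mulVec c ≤ c ⬝ᵥ B.mulVec c := by
    simpa only [sub_mulVec, dotProduct_sub, sub_nonneg] using hBA_psd c
  have hvw : v ≤ w := by
    rw [← NNReal.coe_le_coe, hv, hw]
    exact mul_le_mul_of_nonneg_left hAB ht
  exact integral_gaussianReal_le_of_convexOn hf_conv hvw hf_int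

/-- Constant-coefficient multivariate instance of Theorem 1: for symmetric positive
semidefinite matrices `A ≤ B` (i.e. `B - A` positive semidefinite), `cᵀAc > 0`, `t > 0`,
and a continuous convex `f` of exponential growth, the Gaussian mean of `f` with variance
`t·cᵀAc` is at most the one with variance `t·cᵀBc`.  This gives the comparison
`E^x[f(∑ cᵢXᵢ(t))] ≤ E^x[f(∑ cᵢYᵢ(t))]` for `X(t) = x + σW(t)`, `Y(t) = x + ρW(t)` with
`σσᵀ = A`, `ρρᵀ = B`, since `∑ cᵢXᵢ(t) ∼ N(∑ cᵢxᵢ, t·cᵀσσᵀc)`. -/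
theorem gaussian_convex_comparison_matrix_variance
    (n : ℕ) (hn : 1 ≤ n) (A B : Matrix (Fin n) (Fin n) ℝ)
    (hA_symm : A.IsSymm) (hB_symm : B.IsSymm)
    (hA_psd : ∀ y : Fin n → ℝ, 0 ≤ y ⬝ᵥ A.mulVec y)
    (hB_psd : ∀ y : Fin n → ℝ, 0 ≤ y ⬝ᵥ B.mulVec y)
    (hBA_psd : ∀ y : Fin n → ℝ, 0 ≤ y ⬝ᵥ (B - A).mulVec y)
    (c : Fin n → ℝ) (hc : 0 < c ⬝ᵥ A.mulVec c)
    (m t : ℝ) (ht : 0 < t)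
    (f : ℝ → ℝ) (hf_cont : Continuous f) (hf_conv : ConvexOn ℝ Set.univ f)
    (C a : ℝ) (hC : 0 ≤ C) (ha : 0 ≤ a)
    (hf_growth : ∀ y : ℝ, |f y| ≤ C * Real.exp (a * |y|)) :
    ∫ y, f y ∂(gaussianReal m (t * (c ⬝ᵥ A.mulVec c)).toNNReal)
      ≤ ∫ y, f y ∂(gaussianReal m (t * (c ⬝ᵥ B.mulVec c)).toNNReal) := by
  have hf_int (v : ℝ≥0) : Integrable f (gaussianReal m v) :=
    integrable_of_norm_le_mul_exp_abs hf_cont.aestronglyMeasurable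
      (integrable_exp_mul_gaussianReal a) (integrable_exp_mul_gaussianReal (-a))
      (.of_forall hf_growth)
  exact gaussian_convex_comparison_matrix_variance_general hBA_psd c ht.le
    (Real.coe_toNNReal _ (mul_pos ht hc).le) (Real.coe_toNNReal _ (mul_nonneg ht.le (hB_psd c)))
    hf_conv (hf_int _)
end
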